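/- For 1 ≤ k ≤ n, the function (1-p) H'_{k|n}(p)/H_{k|n}(p) is decreasing in p ∈ (0,1). Equivalently, the ratio N(p)/D(p) is increasing in p ∈ (0,1), where N(p) = ∫₀¹ u^{k-1}((1-up)/(1-p))^{n-k-1}((1-u)/(1-p)) du and D(p) = ∫₀¹ u^{k-1}((1-up)/(1-p))^{n-k} du. -/

import Mathlib

noncomputable def koonB (k n : ℕ) : ℝ :=
  ∫ u in (0:ℝ)..1, u ^ (k - 1) * (1 - u) ^ (n - k)

noncomputable def koonRel (k n : ℕ) (p : ℝ) : ℝ :=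
  (1 / koonB k n) * ∫ u in (0:ℝ)..p, u ^ (k - 1) * (1 - u) ^ (n - k)

noncomputable def koonH (k n : ℕ) (p : ℝ) : ℝ :=
  p * (p ^ (k - 1) * (1 - p) ^ (n - k) / koonB k n) / koonRel k n p

noncomputable def betaScaledNum (a m : ℕ) (p : ℝ) : ℝ :=
  ∫ u in (0:ℝ)..1, u ^ a * (1 - u * p) ^ (m - 1) * (1 - u)

noncomputable def betaScaledDen (a m : ℕ) (p : ℝ) : ℝ :=
  ∫ u in (0:ℝ)..1, u ^ a * (1 - u * p) ^ m

lemma one_sub_mul_pos_of_mem {u p : ℝ} (hu0 : 0 ≤ u) (hu1 : u ≤ 1) (hp1 : p < 1) :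
    0 < 1 - u * p := by
  nlinarith [mul_le_mul_of_nonneg_left hp1.le hu0, mul_nonneg hu0 (sub_nonneg.2 hp1.le)]

lemma betaScaledDen_pos (a m : ℕ) {p : ℝ} (hp1 : p < 1) : 0 < betaScaledDen a m p := by
  refine intervalIntegral.intervalIntegral_pos_of_pos_on
    (Continuous.intervalIntegrable (by fun_prop) _ _) ?_ zero_lt_one
  intro u hu
  have := one_sub_mul_pos_of_mem hu.1.le hu.2.le hp1
  have := hu.1
  positivity

lemma betaScaledNum_nonneg (a m : ℕ) {p : ℝ} (hp1 : p < 1) : 0 ≤ betaScaledNum a m p := by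
  refine intervalIntegral.integral_nonneg zero_le_one fun u hu => ?_
  have := one_sub_mul_pos_of_mem hu.1 hu.2 hp1
  have := hu.1
  have := sub_nonneg.2 hu.2
  positivity

lemma betaScaledNum_le_betaScaledDen (a j : ℕ) {p : ℝ} (hp1 : p < 1) :
    betaScaledNum a (j + 1) p ≤ betaScaledDen a (j + 1) p := by
  refine intervalIntegral.integral_mono_on zero_le_one
    (Continuous.intervalIntegrable (by fun_prop) _ _)
    (Continuous.intervalIntegrable (by fun_prop) _ _) fun u hu => ?_
  have h1 := one_sub_mul_pos_of_mem hu.1 hu.2 hp1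
  have h2 := hu.1
  rw [Nat.add_sub_cancel, pow_succ, ← mul_assoc]
  refine mul_le_mul_of_nonneg_left ?_ (by positivity)
  nlinarith

/-- Integration by parts for `u ^ (a + 1) * (1 - u * p) ^ m` on `[0, 1]`. -/
lemma betaScaled_integration_by_parts (a m : ℕ) (p : ℝ) :
    (1 - p) ^ (m + 1) = (a + 1) * (1 - p) * betaScaledDen a m p
      - m * p * (betaScaledDen a m p - betaScaledNum a m p) := by
  have hderiv : ∀ u ∈ Set.uIcc (0:ℝ) 1,
      HasDerivAt (fun u : ℝ => (1 - p) * (u ^ (a + 1) * (1 - u * p) ^ m))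
        ((a + 1) * (1 - p) * (u ^ a * (1 - u * p) ^ m)
          - m * p * (u ^ a * (1 - u * p) ^ m - u ^ a * (1 - u * p) ^ (m - 1) * (1 - u))) u := by
    intro u _
    have h1 : HasDerivAt (fun u : ℝ => 1 - u * p) (-p) u := by
      simpa using ((hasDerivAt_id u).mul_const p).const_sub 1
    have h := ((hasDerivAt_pow (a + 1) u).mul (h1.pow m)).const_mul (1 - p)
    refine h.congr_deriv ?_
    cases m with
    | zero => simp; ring
    | succ j => simp only [Nat.add_sub_cancel, Pi.pow_apply]; push_cast; ring
  have hint := intervalIntegral.integral_eq_sub_of_hasDerivAt hderiv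
    (Continuous.intervalIntegrable (by fun_prop) _ _)
  rw [intervalIntegral.integral_sub (Continuous.intervalIntegrable (by fun_prop) _ _)
    (Continuous.intervalIntegrable (by fun_prop) _ _), intervalIntegral.integral_const_mul,
    intervalIntegral.integral_const_mul,
    intervalIntegral.integral_sub (Continuous.intervalIntegrable (by fun_prop) _ _)
    (Continuous.intervalIntegrable (by fun_prop) _ _)] at hint
  simp only [betaScaledDen, betaScaledNum]
  rw [hint]
  simp
  ring

lemma integral_beta_eq_pow_mul_betaScaledDen (a m : ℕ) (p : ℝ) :
    ∫ u in (0:ℝ)..p, u ^ a * (1 - u) ^ m = p ^ (a + 1) * betaScaledDen a m p := by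
  have h := intervalIntegral.mul_integral_comp_mul_right (a := 0) (b := 1)
    (f := fun u : ℝ => u ^ a * (1 - u) ^ m) p
  simp only [zero_mul, one_mul] at h
  rw [← h, betaScaledDen, pow_succ', mul_assoc,
    ← intervalIntegral.integral_const_mul (p ^ a)]
  congr 2
  ext u
  ring

/-- The ratio `(1 - u * q) ^ j / (1 - u * p) ^ j` is decreasing in `u` on `[0, 1]` for `p ≤ q < 1`. -/
lemma pow_mul_sub_nonneg {p q u v : ℝ} (j : ℕ) (hpq : p ≤ q) (hq1 : q < 1)
    (hu : u ∈ Set.Icc (0:ℝ) 1) (hv : v ∈ Set.Icc (0:ℝ) 1) :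
    0 ≤ ((1 - u * q) ^ j - ((1 - v * q) / (1 - v * p)) ^ j * (1 - u * p) ^ j) * (v - u) := by
  have hup := one_sub_mul_pos_of_mem hu.1 hu.2 (hpq.trans_lt hq1)
  have huq := one_sub_mul_pos_of_mem hu.1 hu.2 hq1
  have hvp := one_sub_mul_pos_of_mem hv.1 hv.2 (hpq.trans_lt hq1)
  have hvq := one_sub_mul_pos_of_mem hv.1 hv.2 hq1
  rw [← mul_pow]
  rcases le_total u v with h | h
  · refine mul_nonneg (sub_nonneg.2 (pow_le_pow_left₀ (by positivity) ?_ j)) (sub_nonneg.2 h)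
    rw [div_mul_eq_mul_div, div_le_iff₀ hvp]
    nlinarith [mul_nonneg (sub_nonneg.2 h) (sub_nonneg.2 hpq)]
  · refine mul_nonneg_of_nonpos_of_nonpos
      (sub_nonpos.2 (pow_le_pow_left₀ huq.le ?_ j)) (sub_nonpos.2 h)
    rw [div_mul_eq_mul_div, le_div_iff₀ hvp]
    nlinarith [mul_nonneg (sub_nonneg.2 h) (sub_nonneg.2 hpq)]

lemma betaScaled_ratio_monotoneOn (a j : ℕ) :
    MonotoneOn (fun p => betaScaledNum a (j + 1) p / betaScaledDen a (j + 1) p)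
      (Set.Ioo (0:ℝ) 1) := by
  intro p hp q hq hpq
  have hDp := betaScaledDen_pos a (j + 1) hp.2
  have hDq := betaScaledDen_pos a (j + 1) hq.2
  have hc0 : 0 ≤ betaScaledNum a (j + 1) p / betaScaledDen a (j + 1) p :=
    div_nonneg (betaScaledNum_nonneg a (j + 1) hp.2) hDp.le
  have hc1 : betaScaledNum a (j + 1) p / betaScaledDen a (j + 1) p ≤ 1 :=
    (div_le_one hDp).2 (betaScaledNum_le_betaScaledDen a j hp.2)
  have hcN : betaScaledNum a (j + 1) p
      - betaScaledNum a (j + 1) p / betaScaledDen a (j + 1) p * betaScaledDen a (j + 1) p = 0 := by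
    field_simp
    ring
  change betaScaledNum a (j + 1) p / betaScaledDen a (j + 1) p ≤ _
  generalize betaScaledNum a (j + 1) p / betaScaledDen a (j + 1) p = c at hc0 hc1 hcN ⊢
  change c ≤ betaScaledNum a (j + 1) q / betaScaledDen a (j + 1) q
  rw [le_div_iff₀ hDq, ← sub_nonneg]
  have hcp : 0 < 1 - c * p := one_sub_mul_pos_of_mem hc0 hc1 hp.2
  -- the zero of the affine function `u ↦ (1 - u) - c * (1 - u * p)`
  obtain ⟨v, hv⟩ : ∃ v, v = (1 - c) / (1 - c * p) := ⟨_, rfl⟩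
  have hvmul : v * (1 - c * p) = 1 - c := by rw [hv]; field_simp
  have hvmem : v ∈ Set.Icc (0:ℝ) 1 := by
    rw [hv]
    refine ⟨div_nonneg (sub_nonneg.2 hc1) hcp.le, (div_le_one hcp).2 ?_⟩
    nlinarith [hp.2]
  have hsub : ∀ x : ℝ, betaScaledNum a (j + 1) x - c * betaScaledDen a (j + 1) x
      = ∫ u in (0:ℝ)..1, (u ^ a * (1 - u * x) ^ j * (1 - u)
        - c * (u ^ a * (1 - u * x) ^ (j + 1))) := by
    intro x
    rw [intervalIntegral.integral_sub (Continuous.intervalIntegrable (by fun_prop) _ _)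
      (Continuous.intervalIntegrable (by fun_prop) _ _), intervalIntegral.integral_const_mul]
    rfl
  rw [← mul_zero (((1 - v * q) / (1 - v * p)) ^ j), ← hcN, hsub, hsub,
    ← intervalIntegral.integral_const_mul]
  refine intervalIntegral.integral_mono_on zero_le_one
    (Continuous.intervalIntegrable (by fun_prop) _ _)
    (Continuous.intervalIntegrable (by fun_prop) _ _) fun u hu => ?_
  have h1 := mul_nonneg (mul_nonneg (pow_nonneg hu.1 a) hcp.le)
    (pow_mul_sub_nonneg j hpq hq.2 hu hvmem)
  have h2 : 0 ≤ c * (u ^ a * (1 - u * q) ^ j) * (u * (q - p)) := by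
    have := one_sub_mul_pos_of_mem hu.1 hu.2 hq.2
    have := hu.1
    have := sub_nonneg.2 hpq
    positivity
  generalize ((1 - v * q) / (1 - v * p)) ^ j = r at h1 ⊢
  rw [pow_succ, pow_succ]
  have hL : (1 - u) - c * (1 - u * p) = (1 - c * p) * (v - u) := by linear_combination -hvmul
  have e : u ^ a * (1 - u * q) ^ j * (1 - u) - c * (u ^ a * ((1 - u * q) ^ j * (1 - u * q)))
      - r * (u ^ a * (1 - u * p) ^ j * (1 - u) - c * (u ^ a * ((1 - u * p) ^ j * (1 - u * p))))
      = u ^ a * (1 - c * p) * (((1 - u * q) ^ j - r * (1 - u * p) ^ j) * (v - u))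
        + c * (u ^ a * (1 - u * q) ^ j) * (u * (q - p)) := by
    linear_combination (u ^ a * ((1 - u * q) ^ j - r * (1 - u * p) ^ j)) * hL
  linarith

lemma koonB_pos (k n : ℕ) : 0 < koonB k n := by
  refine intervalIntegral.intervalIntegral_pos_of_pos_on
    (Continuous.intervalIntegrable (by fun_prop) _ _) (fun u hu => ?_) zero_lt_one
  have := hu.1
  have := sub_pos.2 hu.2
  positivity

lemma koonH_eq (a m : ℕ) :
    koonH (a + 1) (a + 1 + m) =
      fun p => p ^ (a + 1) * (1 - p) ^ m / ∫ u in (0:ℝ)..p, u ^ a * (1 - u) ^ m := by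
  ext p
  have hB := (koonB_pos (a + 1) (a + 1 + m)).ne'
  simp only [koonH, koonRel, Nat.add_sub_cancel, Nat.add_sub_cancel_left]
  rw [pow_succ', ← mul_div_assoc, div_div, ← mul_assoc (koonB _ _), mul_one_div_cancel hB, one_mul,
    mul_assoc]

lemma one_sub_mul_deriv_koonH_div (a m : ℕ) {p H' : ℝ} (hp : p ∈ Set.Ioo (0:ℝ) 1)
    (hH' : HasDerivAt (koonH (a + 1) (a + 1 + m)) H' p) :
    (1 - p) * H' / koonH (a + 1) (a + 1 + m) p
      = -(m * (betaScaledNum a m p / betaScaledDen a m p)) := by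
  have hp0 : 0 < p := hp.1
  have hp1 : 0 < 1 - p := sub_pos.2 hp.2
  have hD := betaScaledDen_pos a m hp.2
  have hI : HasDerivAt (fun p => ∫ u in (0:ℝ)..p, u ^ a * (1 - u) ^ m)
      (p ^ a * (1 - p) ^ m) p :=
    (show Continuous fun u : ℝ => u ^ a * (1 - u) ^ m by fun_prop).integral_hasStrictDerivAt 0 p
      |>.hasDerivAt
  have hI0 : (∫ u in (0:ℝ)..p, u ^ a * (1 - u) ^ m) ≠ 0 := by
    rw [integral_beta_eq_pow_mul_betaScaledDen]
    positivity
  have h1 : HasDerivAt (fun p : ℝ => 1 - p) (-1) p := by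
    simpa using (hasDerivAt_id p).const_sub 1
  rw [koonH_eq] at hH' ⊢
  have h := hH'.unique (((hasDerivAt_pow (a + 1) p).mul (h1.pow m)).div hI hI0)
  have hparts := betaScaled_integration_by_parts a m p
  rw [h]
  simp only [integral_beta_eq_pow_mul_betaScaledDen, Pi.mul_apply, Pi.pow_apply,
    Nat.add_sub_cancel]
  generalize betaScaledDen a m p = D at *
  generalize betaScaledNum a m p = N at *
  have hm : (m : ℝ) * (1 - p) ^ (m - 1) * (1 - p) = m * (1 - p) ^ m := by
    cases m with
    | zero => simp
    | succ j => rw [Nat.add_sub_cancel, pow_succ, mul_assoc]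
  rw [pow_succ] at hparts
  have hX : (1 - p) ^ m ≠ 0 := by positivity
  generalize (1 - p) ^ m = X at *
  generalize (1 - p) ^ (m - 1) = Y at *
  push_cast
  rw [pow_succ]
  have hnumer : (1 - p) * (((a + 1) * p ^ a * X + p ^ a * p * (m * Y * -1)) * (p ^ a * p * D)
      - p ^ a * p * X * (p ^ a * X)) = -(m * N) * p * (p ^ a) ^ 2 * p * X := by
    linear_combination (-(p ^ a) ^ 2 * p ^ 2 * D) * hm - (p ^ a) ^ 2 * p * X * hparts
  rw [← mul_div_assoc, hnumer]
  field_simp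

theorem koonH_log_deriv_decreasing (k n : ℕ) (hk : 1 ≤ k) (hkn : k ≤ n)
    (H' : ℝ → ℝ) (hH' : ∀ p ∈ Set.Ioo (0 : ℝ) 1, HasDerivAt (koonH k n) (H' p) p) :
    AntitoneOn (fun p => (1 - p) * H' p / koonH k n p) (Set.Ioo (0 : ℝ) 1) ∧
      MonotoneOn (fun p =>
        (∫ u in (0:ℝ)..1, u ^ (k - 1) * ((1 - u * p) / (1 - p)) ^ (n - k - 1)
            * ((1 - u) / (1 - p))) /
        (∫ u in (0:ℝ)..1, u ^ (k - 1) * ((1 - u * p) / (1 - p)) ^ (n - k)))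
        (Set.Ioo (0 : ℝ) 1) := by
  obtain ⟨a, rfl⟩ : ∃ a, k = a + 1 := ⟨k - 1, by omega⟩
  obtain ⟨m, rfl⟩ := Nat.exists_eq_add_of_le hkn
  simp only [Nat.add_sub_cancel, Nat.add_sub_cancel_left]
  have hnum : ∀ p : ℝ, (∫ u in (0:ℝ)..1, u ^ a * ((1 - u * p) / (1 - p)) ^ (m - 1)
      * ((1 - u) / (1 - p))) = betaScaledNum a m p / (1 - p) ^ (m - 1 + 1) := by
    intro p
    rw [betaScaledNum, ← intervalIntegral.integral_div]
    congr 1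
    ext u
    rw [div_pow, pow_succ, mul_div_assoc' (u ^ a), div_mul_div_comm]
  have hden : ∀ p : ℝ, (∫ u in (0:ℝ)..1, u ^ a * ((1 - u * p) / (1 - p)) ^ m)
      = betaScaledDen a m p / (1 - p) ^ m := by
    intro p
    rw [betaScaledDen, ← intervalIntegral.integral_div]
    congr 1
    ext u
    rw [div_pow, mul_div_assoc']
  simp only [hnum, hden]
  constructor
  · intro p hp q hq hpq
    simp only
    rw [one_sub_mul_deriv_koonH_div a m hp (hH' p hp),
      one_sub_mul_deriv_koonH_div a m hq (hH' q hq), neg_le_neg_iff]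
    cases m with
    | zero => simp
    | succ j =>
      exact mul_le_mul_of_nonneg_left (betaScaled_ratio_monotoneOn a j hp hq hpq)
        (Nat.cast_nonneg _)
  · cases m with
    | zero =>
      intro p hp q hq hpq
      have h0 := betaScaledNum_nonneg a 0 hp.2
      have hD := betaScaledDen_pos a 0 hp.2
      have hNc : betaScaledNum a 0 q = betaScaledNum a 0 p := by simp [betaScaledNum]
      have hDc : betaScaledDen a 0 q = betaScaledDen a 0 p := by simp [betaScaledDen]
      have := sub_pos.2 hq.2
      simp only [hNc, hDc, Nat.zero_sub, zero_add, pow_one, pow_zero, div_one]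
      gcongr
    | succ j =>
      refine (betaScaled_ratio_monotoneOn a j).congr fun p hp => ?_
      have := (sub_pos.2 hp.2).ne'
      rw [Nat.add_sub_cancel, div_div_div_cancel_right₀ (pow_ne_zero _ this)]
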